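/- arXiv:1203.4450 — 3 statements merged into one kernel-verified Lean document; each statement's English description precedes it below -/
import Mathlib

section
/- Let R be a commutative ring, let I = (x_1,…,x_s,y) be an ideal of R and let p ≥ 2 be an integer. Suppose that the ideal J = (x_1,…,x_s) verifies that α_{J,n} : Sym_n(J) → J^n is an isomorphism for all 2 ≤ n ≤ p. Then the following conditions are equivalent: (i) α_{I,p} : Sym_p(I) → I^p is an isomorphism; (ii) α_{I,n} : Sym_n(I) → I^n is an isomorphism for each 2 ≤ n ≤ p. -/
open scoped TensorProduct
open PiTensorProduct

section SymDefs

variable (R : Type*) [CommRing R]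

/-- The `n`-fold tensor power of (the `R`-module underlying) the ideal `I`. -/
abbrev TensPow (I : Ideal R) (n : ℕ) : Type _ := ⨂[R] (_ : Fin n), ↥I

/-- The multilinear "product" map `(v₁,…,vₙ) ↦ v₁⋯vₙ : Iⁿ ⊆ R`. -/
noncomputable def prodML (I : Ideal R) (n : ℕ) :
    MultilinearMap R (fun _ : Fin n => ↥I) R :=
  (MultilinearMap.mkPiAlgebra R (Fin n) R).compLinearMap fun _ => I.subtype

/-- The symmetrizer relations in the `n`-th tensor power of `I`. -/
noncomputable def symRel (I : Ideal R) (n : ℕ) : Submodule R (TensPow R I n) :=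
  Submodule.span R {z | ∃ (v : Fin n → ↥I) (σ : Equiv.Perm (Fin n)),
    z = tprod R v - tprod R (v ∘ σ)}

/-- The `n`-th symmetric power `Symⁿ(I)` of the ideal `I`, i.e. the `n`-th graded
component of the symmetric algebra of the `R`-module `I`. -/
abbrev SymPow (I : Ideal R) (n : ℕ) : Type _ := TensPow R I n ⧸ symRel R I n

/-- The `n`-th component `α_{I,n} : Symₙ(I) → Iⁿ ⊆ R` of the canonical morphism
`α_I : Sym(I) → R(I)` (composed with the inclusion `Iⁿ ⊆ R`; it is an isomorphism
onto `Iⁿ` iff it is injective as a map to `R`). -/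
noncomputable def alphaCan (I : Ideal R) (n : ℕ) : SymPow R I n →ₗ[R] R :=
  Submodule.liftQ (symRel R I n) (PiTensorProduct.lift (prodML R I n)) (by
    rw [symRel, Submodule.span_le]
    rintro z ⟨v, σ, rfl⟩
    simp only [SetLike.mem_coe, LinearMap.mem_ker, map_sub, PiTensorProduct.lift.tprod]
    have : prodML R I n (v ∘ σ) = prodML R I n v := by
      simp only [prodML, MultilinearMap.compLinearMap_apply,
        MultilinearMap.mkPiAlgebra_apply, Function.comp_apply]
      exact Equiv.prod_comp σ fun i => ((v i : R))
    rw [this, sub_self])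

end SymDefs

/-!
Let `V = R[T₁, …, Tₛ, Y]`, let `Q` be the ideal generated by the homogeneous polynomials that vanish
at `(x₁, …, xₛ, y)`, and identify `Sym(I)` with `V / V·Q₁`, so that `α_{I,n}` is injective if and
only if `Qₙ ⊆ V·Q₁`. Suppose this holds in degree `n + 1` and let `F ∈ Qₙ`. Then
`Y·F ∈ Qₙ₊₁ ⊆ V·Q₁`. As `V·Q₁` is generated by polynomials of degree at most one in `Y`,
the quotient by `Y` of any of its elements lies again in `V·Q₁` up to a polynomial free of `Y`.
Hence `F ≡ H` modulo `V·Q₁` with `H ∈ R[T₁, …, Tₛ]`, homogeneous of degree `n` without loss of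
generality. Now `H` is a relation among the generators of `J`, so the hypothesis on `J` puts `H`,
and with it `F`, into `V·Q₁`. The theorem follows by descending induction on `n`.
-/

namespace SymPow

variable {R : Type*} [CommRing R]

/-- The symmetric product `(v₁, …, vₙ) ↦ v₁⋯vₙ ∈ Symₙ(I)`, i.e. the universal symmetric
multilinear map out of `n` copies of `I`. -/
noncomputable def mk (I : Ideal R) (n : ℕ) :
    MultilinearMap R (fun _ : Fin n => I) (SymPow R I n) :=
  (symRel R I n).mkQ.compMultilinearMap (tprod R)

variable {I : Ideal R} {n : ℕ}

theorem mk_comp_perm (v : Fin n → I) (σ : Equiv.Perm (Fin n)) : mk I n (v ∘ σ) = mk I n v :=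
  .symm <| (Submodule.Quotient.eq (symRel R I n)).2 <| Submodule.subset_span ⟨v, σ, rfl⟩

theorem span_range_mk : Submodule.span R (Set.range (mk I n)) = ⊤ := by
  rw [mk, LinearMap.coe_compMultilinearMap, Set.range_comp, Submodule.span_image,
    PiTensorProduct.span_tprod_eq_top, Submodule.map_top, Submodule.range_mkQ]

theorem alphaCan_mk (v : Fin n → I) : alphaCan R I n (mk I n v) = ∏ i, (v i : R) :=
  PiTensorProduct.lift.tprod (φ := prodML R I n) v

/-- The linear map `v₁⋯vₙ ↦ l(v₁)⋯l(vₙ)` induced by a linear map `l` from `I` to a commutative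
algebra: the degree `n` component of the algebra map `Sym(I) → A` extending `l`. -/
noncomputable def prodLift {A : Type*} [CommRing A] [Algebra R A] (l : I →ₗ[R] A) (n : ℕ) :
    SymPow R I n →ₗ[R] A :=
  (symRel R I n).liftQ
    (PiTensorProduct.lift ((MultilinearMap.mkPiAlgebra R (Fin n) A).compLinearMap fun _ => l)) (by
      rw [symRel, Submodule.span_le]
      rintro _ ⟨v, σ, rfl⟩
      simpa [sub_eq_zero] using (Equiv.prod_comp σ fun i => l (v i)).symm)

theorem prodLift_mk {A : Type*} [CommRing A] [Algebra R A] (l : I →ₗ[R] A) (v : Fin n → I) :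
    prodLift l n (mk I n v) = ∏ i, l (v i) :=
  (PiTensorProduct.lift.tprod v).trans (by simp)

end SymPow

theorem exists_perm_comp_eq_of_sum_single_eq {ι κ : Type*} [Fintype κ] {f g : κ → ι}
    (h : ∑ i, Finsupp.single (f i) 1 = ∑ i, Finsupp.single (g i) (1 : ℕ)) :
    ∃ σ : Equiv.Perm κ, g ∘ σ = f := by
  classical
  have card_fiber (c : ι) : Fintype.card {a // f a = c} = Fintype.card {a // g a = c} := by
    simpa [Finsupp.finsetSum_apply, Finsupp.single_apply, Fintype.card_subtype]
      using DFunLike.congr_fun h c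
  exact ⟨Equiv.ofFiberEquiv fun c => Fintype.equivOfCardEq (card_fiber c),
    funext (Equiv.ofFiberEquiv_map _)⟩

section Polynomial

open Polynomial

theorem divX_mul {A : Type*} [CommSemiring A] (p q : A[X]) :
    divX (p * q) = divX p * q + C (p.coeff 0) * divX q := by
  have : p * q = C (p.coeff 0) * q + X * (divX p * q) := by
    nth_rw 1 [← X_mul_divX_add p]
    ring
  ext k
  rw [coeff_divX, this]
  simp [coeff_X_mul, add_comm]

theorem exists_divX_sub_C_mem_span {A : Type*} [CommRing A] {S : Set A[X]}
    (hS : ∀ L ∈ S, L.natDegree ≤ 1) {p : A[X]} (hp : p ∈ Ideal.span S) :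
    ∃ a, divX p - C a ∈ Ideal.span S := by
  induction hp using Submodule.span_induction with
  | mem L hL =>
    have natDegree_divX : (divX L).natDegree = 0 := by
      rw [natDegree_divX_eq_natDegree_tsub_one, Nat.sub_eq_zero_of_le (hS L hL)]
    refine ⟨(divX L).coeff 0, ?_⟩
    rw [← eq_C_of_natDegree_eq_zero natDegree_divX, sub_self]
    exact zero_mem _
  | zero => exact ⟨0, by simp⟩
  | add p q _ _ hp hq =>
    obtain ⟨a, ha⟩ := hp
    obtain ⟨b, hb⟩ := hq
    refine ⟨a + b, ?_⟩
    rw [divX_add, C_add, add_sub_add_comm]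
    exact add_mem ha hb
  | smul g p hp ih =>
    obtain ⟨a, ha⟩ := ih
    refine ⟨g.coeff 0 * a, ?_⟩
    rw [smul_eq_mul, divX_mul, C_mul, add_sub_assoc, ← mul_sub]
    exact add_mem (Ideal.mul_mem_left _ _ hp) (Ideal.mul_mem_left _ _ ha)

theorem exists_sub_C_mem_span_of_X_mul_mem {A : Type*} [CommRing A] {S : Set A[X]}
    (hS : ∀ L ∈ S, L.natDegree ≤ 1) {p : A[X]} (hp : X * p ∈ Ideal.span S) :
    ∃ a, p - C a ∈ Ideal.span S := by
  have : divX (X * p) = p := by ext; simp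
  simpa only [this] using exists_divX_sub_C_mem_span hS hp

end Polynomial

section LinearRelations

open MvPolynomial

variable {R : Type*} [CommRing R] {ι : Type*}

theorem prod_X_eq_monomial {κ : Type*} [Fintype κ] (f : κ → ι) :
    ∏ i, (X (f i) : MvPolynomial ι R) = monomial (∑ i, Finsupp.single (f i) 1) 1 :=
  (monomial_sum_one Finset.univ fun i => Finsupp.single (f i) 1).symm

theorem homogeneousSubmodule_eq_span_prod_X (n : ℕ) :
    homogeneousSubmodule ι R n =
      Submodule.span R (Set.range fun f : Fin n → ι => ∏ i, X (f i)) := by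
  rw [← homogeneousSubmodule_one_pow, homogeneousSubmodule_one_eq_span_X, Submodule.span_pow]
  congr 1
  ext F
  rw [Set.mem_pow_iff_prod]
  constructor
  · rintro ⟨g, hg, rfl⟩
    choose f hf using hg
    exact ⟨f, by simp only [hf]⟩
  · rintro ⟨f, rfl⟩
    exact ⟨fun i => X (f i), fun i => ⟨f i, rfl⟩, rfl⟩

theorem eq_of_isHomogeneous_of_prod_X {M : Type*} [AddCommGroup M] [Module R M] {n : ℕ}
    {φ ψ : MvPolynomial ι R →ₗ[R] M}
    (h : ∀ f : Fin n → ι, φ (∏ i, X (f i)) = ψ (∏ i, X (f i)))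
    {F : MvPolynomial ι R} (hF : F.IsHomogeneous n) : φ F = ψ F := by
  rw [← mem_homogeneousSubmodule, homogeneousSubmodule_eq_span_prod_X] at hF
  exact LinearMap.eqOn_span (Set.forall_mem_range.2 h) hF

/-- The linear form `∑ cᵢ Tᵢ` with coefficient vector `c`. -/
noncomputable def linearForm : (ι →₀ R) →ₗ[R] MvPolynomial ι R :=
  Finsupp.linearCombination R X

theorem linearForm_single_one (i : ι) :
    linearForm (Finsupp.single i 1) = (X i : MvPolynomial ι R) := by
  simp [linearForm]

theorem isHomogeneous_linearForm (c : ι →₀ R) : (linearForm c).IsHomogeneous 1 := by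
  rw [← mem_homogeneousSubmodule, homogeneousSubmodule_one_eq_span_X, linearForm,
    ← Finsupp.range_linearCombination]
  exact LinearMap.mem_range_self _ c

theorem rename_linearForm {κ : Type*} (f : ι → κ) (c : ι →₀ R) :
    rename f (linearForm c) = linearForm (c.mapDomain f) := by
  rw [linearForm, linearForm, Finsupp.linearCombination_mapDomain, ← AlgHom.toLinearMap_apply,
    Finsupp.apply_linearCombination]
  congr
  ext
  simp

theorem eval_linearForm (x : ι → R) (c : ι →₀ R) :
    eval x (linearForm c) = Finsupp.linearCombination R x c := by
  rw [← coe_aeval_eq_eval, RingHom.coe_coe, ← AlgHom.toLinearMap_apply, linearForm,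
    Finsupp.apply_linearCombination]
  congr
  ext
  simp

/-- The ideal `V·Q₁` of `V = R[Tᵢ]` generated by the linear forms that vanish at `x`, so that
`V / V·Q₁` is the symmetric algebra of the ideal generated by the `xᵢ`. -/
noncomputable def linearRelationIdeal (x : ι → R) : Ideal (MvPolynomial ι R) :=
  Ideal.span (linearForm '' {c | Finsupp.linearCombination R x c = 0})

/-- `Qₙ = Vₙ₋₁·Q₁`: every relation of degree `n` between the `xᵢ` is a consequence of the linear
ones. -/
def RelationsGeneratedByLinear (x : ι → R) (n : ℕ) : Prop :=
  ∀ F : MvPolynomial ι R, F.IsHomogeneous n → eval x F = 0 → F ∈ linearRelationIdeal x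

theorem eval_eq_zero_of_mem_linearRelationIdeal {x : ι → R} {F : MvPolynomial ι R}
    (hF : F ∈ linearRelationIdeal x) : eval x F = 0 := by
  have : linearRelationIdeal x ≤ RingHom.ker (eval x) := by
    rw [linearRelationIdeal, Ideal.span_le]
    rintro _ ⟨c, hc, rfl⟩
    exact (eval_linearForm x c).trans hc
  exact this hF

theorem homogeneousComponent_mem_linearRelationIdeal {x : ι → R} {F : MvPolynomial ι R}
    (hF : F ∈ linearRelationIdeal x) (n : ℕ) :
    homogeneousComponent n F ∈ linearRelationIdeal x := by
  let _ : GradedAlgebra (homogeneousSubmodule ι R) := MvPolynomial.gradedAlgebra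
  refine homogeneousComponent_mem_of_mem (Ideal.homogeneous_span _ _ ?_) hF n
  rintro _ ⟨c, -, rfl⟩
  exact ⟨1, isHomogeneous_linearForm c⟩

section Presentation

variable {I : Ideal R} (x : ι → I) (n : ℕ)

/-- The projection of `V = R[Tᵢ]` onto `Symₙ(I)` that sends `T_{f 1}⋯T_{f n}` to
`x_{f 1}⋯x_{f n}` and all monomials of degree other than `n` to zero. -/
noncomputable def toSymPow : MvPolynomial ι R →ₗ[R] SymPow R I n :=
  (basisMonomials ι R).constr R
    (Function.extend (fun f : Fin n → ι => ∑ i, Finsupp.single (f i) 1)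
      (fun f => SymPow.mk I n (x ∘ f)) 0)

theorem toSymPow_monomial (m : ι →₀ ℕ) :
    toSymPow x n (monomial m 1) =
      Function.extend (fun f : Fin n → ι => ∑ i, Finsupp.single (f i) 1)
        (fun f => SymPow.mk I n (x ∘ f)) 0 m := by
  simpa only [toSymPow, coe_basisMonomials] using (basisMonomials ι R).constr_basis R _ m

theorem toSymPow_prod_X (f : Fin n → ι) :
    toSymPow x n (∏ i, X (f i)) = SymPow.mk I n (x ∘ f) := by
  have factorsThrough : (fun f => SymPow.mk I n (x ∘ f)).FactorsThrough
      (fun f : Fin n → ι => ∑ i, Finsupp.single (f i) 1) := by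
    intro f g h
    obtain ⟨σ, rfl⟩ := exists_perm_comp_eq_of_sum_single_eq h
    exact SymPow.mk_comp_perm (x ∘ g) σ
  rw [prod_X_eq_monomial, toSymPow_monomial, factorsThrough.extend_apply]

theorem toSymPow_eq_zero_of_isHomogeneous {d : ℕ} (hd : d ≠ n) {F : MvPolynomial ι R}
    (hF : F.IsHomogeneous d) : toSymPow x n F = 0 := by
  refine eq_of_isHomogeneous_of_prod_X (ψ := 0) (fun f => ?_) hF
  rw [prod_X_eq_monomial, toSymPow_monomial, Function.extend_apply']
  · rfl
  · rintro ⟨g, hg⟩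
    exact hd (by simpa using congrArg Finsupp.degree hg.symm)

theorem toSymPow_prod_linearForm (c : Fin n → ι →₀ R) :
    toSymPow x n (∏ i, linearForm (c i)) =
      SymPow.mk I n fun i => Finsupp.linearCombination R x (c i) := by
  have key : (toSymPow x n).compMultilinearMap
        ((MultilinearMap.mkPiAlgebra R (Fin n) (MvPolynomial ι R)).compLinearMap
          fun _ => linearForm) =
      (SymPow.mk I n).compLinearMap fun _ => Finsupp.linearCombination R x := by
    refine Module.Basis.ext_multilinear (fun _ => Finsupp.basisSingleOne) fun f => ?_
    simpa [linearForm_single_one, Function.comp_def] using toSymPow_prod_X x n f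
  simpa using congrArg (· c) key

variable {x n}

theorem alphaCan_toSymPow {F : MvPolynomial ι R} (hF : F.IsHomogeneous n) :
    alphaCan R I n (toSymPow x n F) = eval (fun i => (x i : R)) F := by
  refine eq_of_isHomogeneous_of_prod_X (φ := alphaCan R I n ∘ₗ toSymPow x n)
    (ψ := (aeval fun i => (x i : R)).toLinearMap) (fun f => ?_) hF
  simp [toSymPow_prod_X, SymPow.alphaCan_mk]

theorem linearCombination_coe_eq_zero_iff {c : ι →₀ R} :
    Finsupp.linearCombination R (fun i => (x i : R)) c = 0 ↔
      Finsupp.linearCombination R x c = 0 := by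
  rw [← Submodule.coe_eq_zero, ← I.subtype_apply, Finsupp.apply_linearCombination]
  rfl

theorem toSymPow_mul_linearForm {c : ι →₀ R} (hc : Finsupp.linearCombination R x c = 0)
    (G : MvPolynomial ι R) : toSymPow x n (G * linearForm c) = 0 := by
  suffices ∀ d, ∀ G : MvPolynomial ι R, G.IsHomogeneous d → toSymPow x n (G * linearForm c) = 0 by
    rw [← sum_homogeneousComponent G, Finset.sum_mul, map_sum]
    exact Finset.sum_eq_zero fun d _ => this d _ (homogeneousComponent_isHomogeneous d G)
  intro d G hG
  obtain rfl | hd := eq_or_ne (d + 1) n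
  · refine eq_of_isHomogeneous_of_prod_X
      (φ := toSymPow x (d + 1) ∘ₗ LinearMap.mulRight R (linearForm c)) (ψ := 0) (fun f => ?_) hG
    have prod_eq : (∏ i, X (f i)) * linearForm c =
        ∏ i, linearForm
          (Fin.snoc (α := fun _ => ι →₀ R) (fun i => Finsupp.single (f i) 1) c i) := by
      simp [Fin.prod_univ_castSucc, linearForm_single_one]
    rw [LinearMap.comp_apply, LinearMap.mulRight_apply, prod_eq, toSymPow_prod_linearForm]
    exact (SymPow.mk I (d + 1)).map_coord_zero (Fin.last d) (by simpa using hc)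
  · exact toSymPow_eq_zero_of_isHomogeneous x n hd (hG.mul (isHomogeneous_linearForm c))

theorem toSymPow_eq_zero_of_mem_linearRelationIdeal {F : MvPolynomial ι R}
    (hF : F ∈ linearRelationIdeal fun i => (x i : R)) : toSymPow x n F = 0 := by
  induction hF using Submodule.closure_induction with
  | zero => exact map_zero _
  | add F G _ _ hF hG => rw [map_add, hF, hG, add_zero]
  | smul_mem G L hL =>
    obtain ⟨c, hc, rfl⟩ := hL
    exact toSymPow_mul_linearForm (linearCombination_coe_eq_zero_iff.1 hc) G

theorem exists_isHomogeneous_toSymPow_eq (hx : Submodule.span R (Set.range x) = ⊤)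
    (z : SymPow R I n) :
    ∃ F : MvPolynomial ι R, F.IsHomogeneous n ∧ toSymPow x n F = z := by
  suffices ⊤ ≤ (homogeneousSubmodule ι R n).map (toSymPow x n) from this trivial
  rw [← SymPow.span_range_mk, Submodule.span_le]
  rintro _ ⟨v, rfl⟩
  have hv (i : Fin n) : ∃ c : ι →₀ R, Finsupp.linearCombination R x c = v i := by
    rw [← LinearMap.mem_range, Finsupp.range_linearCombination, hx]
    trivial
  choose c hc using hv
  refine ⟨∏ i, linearForm (c i), ?_, ?_⟩
  · simpa using IsHomogeneous.prod Finset.univ (fun i => linearForm (c i)) (fun _ => 1)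
      fun i _ => isHomogeneous_linearForm (c i)
  · simp only [toSymPow_prod_linearForm, hc]

theorem exists_linearMap_apply_eq_mk_X (hx : Submodule.span R (Set.range x) = ⊤) :
    ∃ l : I →ₗ[R] MvPolynomial ι R ⧸ linearRelationIdeal fun i => (x i : R),
      ∀ i, l (x i) = Ideal.Quotient.mk _ (X i) := by
  let π : (ι →₀ R) →ₗ[R] I := Finsupp.linearCombination R x
  let g := (Ideal.Quotient.mkₐ R (linearRelationIdeal fun i => (x i : R))).toLinearMap ∘ₗ linearForm
  have surjective_π : Function.Surjective π := by
    rw [← LinearMap.range_eq_top, Finsupp.range_linearCombination, hx]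
  have ker_π_le : LinearMap.ker π ≤ LinearMap.ker g := fun c hc =>
    Ideal.Quotient.eq_zero_iff_mem.2
      (Ideal.subset_span ⟨c, linearCombination_coe_eq_zero_iff.2 hc, rfl⟩)
  let l := (LinearMap.ker π).liftQ g ker_π_le ∘ₗ
    (π.quotKerEquivOfSurjective surjective_π).symm.toLinearMap
  refine ⟨l, fun i => ?_⟩
  have l_π (c : ι →₀ R) : l (π c) = g c := by
    simp only [l, LinearMap.comp_apply, LinearEquiv.coe_coe,
      ← LinearMap.quotKerEquivOfSurjective_apply_mk π surjective_π, LinearEquiv.symm_apply_apply,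
      Submodule.liftQ_apply]
  simpa [π, g, linearForm_single_one] using l_π (Finsupp.single i 1)

theorem mem_linearRelationIdeal_of_toSymPow_eq_zero (hx : Submodule.span R (Set.range x) = ⊤)
    {F : MvPolynomial ι R} (hF : F.IsHomogeneous n) (h : toSymPow x n F = 0) :
    F ∈ linearRelationIdeal fun i => (x i : R) := by
  obtain ⟨l, hl⟩ := exists_linearMap_apply_eq_mk_X hx
  have prodLift_toSymPow : SymPow.prodLift l n (toSymPow x n F) = Ideal.Quotient.mk _ F := by
    refine eq_of_isHomogeneous_of_prod_X (φ := SymPow.prodLift l n ∘ₗ toSymPow x n)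
      (ψ := (Ideal.Quotient.mkₐ R _).toLinearMap) (fun f => ?_) hF
    simp [toSymPow_prod_X, SymPow.prodLift_mk, hl]
  rw [← Ideal.Quotient.eq_zero_iff_mem, ← prodLift_toSymPow, h, map_zero]

theorem injective_alphaCan_iff_of_span_eq_top (hx : Submodule.span R (Set.range x) = ⊤) :
    Function.Injective (alphaCan R I n) ↔ RelationsGeneratedByLinear (fun i => (x i : R)) n := by
  rw [injective_iff_map_eq_zero]
  constructor
  · intro h F hF eval_eq_zero
    exact mem_linearRelationIdeal_of_toSymPow_eq_zero hx hF
      (h _ ((alphaCan_toSymPow hF).trans eval_eq_zero))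
  · intro h z hz
    obtain ⟨F, hF, rfl⟩ := exists_isHomogeneous_toSymPow_eq hx z
    exact toSymPow_eq_zero_of_mem_linearRelationIdeal
      (h F hF ((alphaCan_toSymPow hF).symm.trans hz))

end Presentation

theorem injective_alphaCan_span_range_iff (x : ι → R) (n : ℕ) :
    Function.Injective (alphaCan R (Ideal.span (Set.range x)) n) ↔
      RelationsGeneratedByLinear x n := by
  let gens (i : ι) : Ideal.span (Set.range x) := ⟨x i, Ideal.subset_span ⟨i, rfl⟩⟩
  have range_gens : Set.range gens = (↑) ⁻¹' Set.range x := by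
    ext
    simp [gens, Subtype.ext_iff]
  exact injective_alphaCan_iff_of_span_eq_top (x := gens)
    (range_gens ▸ Submodule.span_span_coe_preimage)

section Option

variable {w : Option ι → R}

theorem rename_some_mem_linearRelationIdeal {F : MvPolynomial ι R}
    (hF : F ∈ linearRelationIdeal (w ∘ some)) : rename some F ∈ linearRelationIdeal w := by
  have : linearRelationIdeal (w ∘ some) ≤
      (linearRelationIdeal w).comap (rename some : MvPolynomial ι R →ₐ[R] _) := by
    rw [linearRelationIdeal, Ideal.span_le]
    rintro _ ⟨c, hc, rfl⟩
    refine Ideal.subset_span ⟨c.mapDomain some, ?_, ?_⟩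
    · exact (Finsupp.linearCombination_mapDomain R some c).trans hc
    · exact (rename_linearForm some c).symm
  exact this hF

theorem natDegree_optionEquivLeft_linearForm_le (c : Option ι →₀ R) :
    (optionEquivLeft R ι (linearForm c)).natDegree ≤ 1 := by
  rw [natDegree_optionEquivLeft]
  exact (degreeOf_le_totalDegree _ none).trans (isHomogeneous_linearForm c).totalDegree_le

theorem optionEquivLeft_rename_some (H : MvPolynomial ι R) :
    optionEquivLeft R ι (rename some H) = Polynomial.C H := by
  rw [← AlgEquiv.eq_symm_apply, optionEquivLeft_symm_apply, Polynomial.aevalTower_C]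

theorem exists_sub_rename_mem_of_X_none_mul_mem {F : MvPolynomial (Option ι) R}
    (hF : X none * F ∈ linearRelationIdeal w) :
    ∃ H : MvPolynomial ι R, F - rename some H ∈ linearRelationIdeal w := by
  let e := (optionEquivLeft R ι).toRingEquiv
  let S := linearForm '' {c | Finsupp.linearCombination R w c = 0}
  have mem_iff (G : MvPolynomial (Option ι) R) :
      e G ∈ Ideal.span (e '' S) ↔ G ∈ linearRelationIdeal w := by
    rw [← Ideal.map_span, Ideal.mem_map_of_equiv]
    exact ⟨fun ⟨K, hK, h⟩ => e.injective h ▸ hK, fun hG => ⟨G, hG, rfl⟩⟩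
  have natDegree_le : ∀ L ∈ e '' S, L.natDegree ≤ 1 := by
    rintro _ ⟨_, ⟨c, -, rfl⟩, rfl⟩
    exact natDegree_optionEquivLeft_linearForm_le c
  obtain ⟨H, hH⟩ := exists_sub_C_mem_span_of_X_mul_mem natDegree_le (p := e F)
    (by simpa [e] using (mem_iff _).2 hF)
  exact ⟨H, (mem_iff _).1 (by simpa [e, optionEquivLeft_rename_some] using hH)⟩

theorem RelationsGeneratedByLinear.of_succ {n : ℕ}
    (hw : RelationsGeneratedByLinear w (n + 1))
    (hx : RelationsGeneratedByLinear (w ∘ some) n) : RelationsGeneratedByLinear w n := by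
  intro F hF eval_F
  have X_mul_mem : X none * F ∈ linearRelationIdeal w :=
    hw _ (add_comm 1 n ▸ (isHomogeneous_X R none).mul hF) (by rw [map_mul, eval_F, mul_zero])
  obtain ⟨H, hH⟩ := exists_sub_rename_mem_of_X_none_mul_mem X_mul_mem
  have sub_mem : F - rename some (homogeneousComponent n H) ∈ linearRelationIdeal w := by
    simpa [homogeneousComponent_eq_self hF, rename_homogeneousComponent]
      using homogeneousComponent_mem_linearRelationIdeal hH n
  have eval_H : eval (w ∘ some) (homogeneousComponent n H) = 0 := by
    simpa [eval_F, eval_rename] using eval_eq_zero_of_mem_linearRelationIdeal sub_mem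
  exact (Submodule.sub_mem_iff_left _ (rename_some_mem_linearRelationIdeal
    (hx _ (homogeneousComponent_isHomogeneous n H) eval_H))).1 sub_mem

end Option

theorem injective_alphaCan_sup_span_singleton_of_succ {J : Ideal R} {y : R} {n : ℕ}
    (hI : Function.Injective (alphaCan R (J ⊔ Ideal.span {y}) (n + 1)))
    (hJ : Function.Injective (alphaCan R J n)) :
    Function.Injective (alphaCan R (J ⊔ Ideal.span {y}) n) := by
  let w : Option J → R := fun o => o.elim y Subtype.val
  have span_some : Ideal.span (Set.range (w ∘ some)) = J := by
    simp [w, Function.comp_def]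
  have span_w : Ideal.span (Set.range w) = J ⊔ Ideal.span {y} := by
    simp [w, Option.range_elim, Ideal.span_insert, sup_comm]
  rw [← span_w, injective_alphaCan_span_range_iff] at hI ⊢
  rw [← span_some, injective_alphaCan_span_range_iff] at hJ
  exact hI.of_succ hJ

end LinearRelations

theorem statement10_general {R : Type*} [CommRing R] (J : Ideal R) (y : R) (p : ℕ) (hp : 2 ≤ p)
    (hJ : ∀ n, 2 ≤ n → n < p → Function.Injective (alphaCan R J n)) :
    Function.Injective (alphaCan R (J ⊔ Ideal.span {y}) p) ↔
      ∀ n, 2 ≤ n → n ≤ p → Function.Injective (alphaCan R (J ⊔ Ideal.span {y}) n) := by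
  refine ⟨fun h n hn hnp => ?_, fun h => h p hp le_rfl⟩
  induction hnp using Nat.decreasingInduction with
  | self => exact h
  | of_succ k hk ih =>
    exact injective_alphaCan_sup_span_singleton_of_succ (ih (by omega)) (hJ k hn hk)

/-- **Theorem B.**  Let `I = (x₁,…,xₛ,y)` and `p ≥ 2`.  If `α_{J,n} : Symₙ(J) → Jⁿ`
is an isomorphism for all `2 ≤ n ≤ p`, where `J = (x₁,…,xₛ)`, then `α_{I,p}` is an
isomorphism iff `α_{I,n}` is an isomorphism for each `2 ≤ n ≤ p`.
(Note `α_{I,n}` is always surjective onto `Iⁿ`, so being an isomorphism onto `Iⁿ` is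
equivalent to the injectivity of the composition `Symₙ(I) → Iⁿ ⊆ R`.) -/
theorem statement10 {R : Type*} [CommRing R] {s : ℕ} (x : Fin s → R) (y : R)
    (p : ℕ) (hp : 2 ≤ p)
    (hJ : ∀ n, 2 ≤ n → n ≤ p →
      Function.Injective (alphaCan R (Ideal.span (Set.range x)) n)) :
    Function.Injective (alphaCan R (Ideal.span (Set.range (Fin.snoc x y))) p) ↔
      ∀ n, 2 ≤ n → n ≤ p →
        Function.Injective (alphaCan R (Ideal.span (Set.range (Fin.snoc x y))) n) := by
  rw [Fin.range_snoc, Ideal.span_insert, sup_comm]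
  exact statement10_general _ y p hp fun n hn hnp => hJ n hn hnp.le
end

section
/- Let R be a commutative ring and let I = (x) be a principal ideal. Then ker(α_{I,n}) ≅ (0 : x^n)/(0 : x) for all n ≥ 2. In particular there are injections ker(α_{I,2}) ↪ ker(α_{I,3}) ↪ … ↪ ker(α_{I,p}), and if α_{I,p} is an isomorphism for some p ≥ 2, then α_I : Sym_R(I) → R(I) is an isomorphism. -/
open scoped TensorProduct
open PiTensorProduct

/-!
Write `I = R y`. For `n ≥ 1` the module `Symₙ(I)` is generated by `yⁿ`, and the annihilator of `yⁿ`
is exactly `(0 : y)`: since `I ≅ R ⧸ (0 : y)` with `y` corresponding to `1`, multiplication in the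
ring `R ⧸ (0 : y)` gives a linear map `Symₙ(I) → R ⧸ (0 : y)` sending `yⁿ` to `1`. Under the
resulting presentation `R ⧸ (0 : y) ≅ Symₙ(I)` the map `α_{I,n}` becomes `r ↦ r yⁿ`, so its kernel
is `(0 : yⁿ) ⧸ (0 : y)`. These quotients grow with `n`, and `(0 : y²) = (0 : y)` forces
`(0 : yⁿ) = (0 : y)` for all `n ≥ 1`.
-/

section LinearAlgebra

variable {R M N P : Type*} [Ring R] [AddCommGroup M] [AddCommGroup N] [AddCommGroup P]
  [Module R M] [Module R N] [Module R P]

theorem nonempty_ker_equiv_ker_comp_quotient {f : M →ₗ[R] N} (hf : Function.Surjective f)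
    (g : N →ₗ[R] P) :
    Nonempty (LinearMap.ker g ≃ₗ[R] LinearMap.ker (g ∘ₗ f) ⧸
      (LinearMap.ker f).comap (LinearMap.ker (g ∘ₗ f)).subtype) := by
  let f' : LinearMap.ker (g ∘ₗ f) →ₗ[R] LinearMap.ker g := f.restrict fun _ h => h
  have hf' : Function.Surjective f' := by
    rintro ⟨z, hz⟩
    obtain ⟨m, rfl⟩ := hf z
    exact ⟨⟨m, hz⟩, rfl⟩
  have hker : LinearMap.ker f' = (LinearMap.ker f).comap (LinearMap.ker (g ∘ₗ f)).subtype := by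
    ext m
    exact Subtype.ext_iff
  exact ⟨(f'.quotKerEquivOfSurjective hf').symm ≪≫ₗ Submodule.quotEquivOfEq _ _ hker⟩

theorem injective_iff_ker_comp_le_ker {f : M →ₗ[R] N} (hf : Function.Surjective f)
    {g : N →ₗ[R] P} :
    Function.Injective g ↔ LinearMap.ker (g ∘ₗ f) ≤ LinearMap.ker f := by
  rw [LinearMap.ker_comp, ← Submodule.comap_bot f,
    Submodule.comap_le_comap_iff_of_surjective hf, le_bot_iff, LinearMap.ker_eq_bot]

theorem exists_injective_quotient_comap_subtype {K K' : Submodule R M} (hK : K ≤ K')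
    (L : Submodule R M) :
    ∃ f : (K ⧸ L.comap K.subtype) →ₗ[R] (K' ⧸ L.comap K'.subtype), Function.Injective f := by
  have hcomap : L.comap K.subtype = (L.comap K'.subtype).comap (Submodule.inclusion hK) := rfl
  refine ⟨Submodule.mapQ _ _ (Submodule.inclusion hK) hcomap.le, ?_⟩
  rw [← LinearMap.ker_eq_bot, Submodule.ker_mapQ, ← hcomap, Submodule.mkQ_map_self]

end LinearAlgebra

section Colon

variable {R : Type*} [CommSemiring R] (x : R)

theorem bot_colon_span_pow_mono :
    Monotone fun n : ℕ => (⊥ : Ideal R).colon (Ideal.span {x ^ n}) :=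
  fun _ _ hmn => Submodule.colon_mono le_rfl
    (Ideal.span_singleton_le_span_singleton.2 (pow_dvd_pow x hmn))

variable {x}

theorem bot_colon_span_pow_le_of_two_le {p : ℕ} (hp : 2 ≤ p)
    (h : (⊥ : Ideal R).colon (Ideal.span {x ^ p}) ≤ (⊥ : Ideal R).colon (Ideal.span {x}))
    {n : ℕ} (hn : n ≠ 0) :
    (⊥ : Ideal R).colon (Ideal.span {x ^ n}) ≤ (⊥ : Ideal R).colon (Ideal.span {x}) := by
  have mul_eq_zero_of_mul_sq (r : R) (hr : r * x ^ 2 = 0) : r * x = 0 := by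
    simpa [Ideal.mem_colon_span_singleton] using
      h (bot_colon_span_pow_mono x hp (Ideal.mem_colon_span_singleton.2 hr))
  intro r hr
  simp only [Ideal.mem_colon_span_singleton, Submodule.mem_bot] at hr ⊢
  induction n, Nat.one_le_iff_ne_zero.2 hn using Nat.le_induction generalizing r with
  | base => simpa using hr
  | succ k hk ih =>
    have hrx : r * x * x = 0 :=
      ih (Nat.one_le_iff_ne_zero.1 hk) (by rw [mul_assoc, ← pow_succ', hr])
    exact mul_eq_zero_of_mul_sq r (by rw [sq, ← mul_assoc, hrx])

end Colon

section SymPow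

variable {R : Type*} [CommRing R] {I : Ideal R}

/-- The symmetric product `(v₁, …, vₙ) ↦ v₁ ⋯ vₙ` in `Symₙ(I)`. -/
noncomputable def symProd (I : Ideal R) (n : ℕ) :
    MultilinearMap R (fun _ : Fin n => I) (SymPow R I n) :=
  (symRel R I n).mkQ.compMultilinearMap (tprod R)

theorem span_range_symProd (n : ℕ) : Submodule.span R (Set.range (symProd I n)) = ⊤ := by
  have hrange : Set.range (symProd I n) = (symRel R I n).mkQ '' Set.range (tprod R) := by
    rw [← Set.range_comp]
    rfl
  rw [hrange, Submodule.span_image, span_tprod_eq_top, Submodule.map_top, Submodule.range_mkQ]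

theorem alphaCan_symProd {n : ℕ} (v : Fin n → I) :
    alphaCan R I n (symProd I n v) = ∏ i, (v i : R) := by
  simp [alphaCan, symProd, prodML]

theorem alphaCan_zero_injective (I : Ideal R) : Function.Injective (alphaCan R I 0) := by
  have hcomp : alphaCan R I 0 ∘ₗ (symRel R I 0).mkQ = (isEmptyEquiv (Fin 0)).toLinearMap := by
    ext v
    simpa [symProd] using alphaCan_symProd v
  rw [injective_iff_ker_comp_le_ker (symRel R I 0).mkQ_surjective, hcomp, LinearEquiv.ker]
  exact bot_le

theorem symRel_le_ker_lift {N : Type*} [AddCommGroup N] [Module R N] {n : ℕ}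
    (m : MultilinearMap R (fun _ : Fin n => I) N)
    (hm : ∀ (v : Fin n → I) (σ : Equiv.Perm (Fin n)), m (v ∘ σ) = m v) :
    symRel R I n ≤ LinearMap.ker (lift m) := by
  rw [symRel, Submodule.span_le]
  rintro _ ⟨v, σ, rfl⟩
  rw [SetLike.mem_coe, LinearMap.mem_ker, map_sub, lift.tprod, lift.tprod, hm, sub_self]

theorem exists_linearMap_symProd_eq_prod {A : Type*} [CommRing A] [Algebra R A]
    (φ : I →ₗ[R] A) (n : ℕ) :
    ∃ Φ : SymPow R I n →ₗ[R] A, ∀ v, Φ (symProd I n v) = ∏ i, φ (v i) := by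
  let m := (MultilinearMap.mkPiAlgebra R (Fin n) A).compLinearMap fun _ => φ
  have hm (v : Fin n → I) (σ : Equiv.Perm (Fin n)) : m (v ∘ σ) = m v :=
    Equiv.prod_comp σ fun i => φ (v i)
  exact ⟨(symRel R I n).liftQ (lift m) (symRel_le_ker_lift m hm), fun v => lift.tprod v⟩

/-- The map `r ↦ r yⁿ` from `R` to `Symₙ(I)`, which presents `Symₙ(I)` as a cyclic module when `y`
generates `I`. -/
noncomputable def symPowGen (y : I) (n : ℕ) : R →ₗ[R] SymPow R I n :=
  LinearMap.toSpanSingleton R _ (symProd I n fun _ => y)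

theorem ker_alphaCan_comp_symPowGen (y : I) (n : ℕ) :
    LinearMap.ker (alphaCan R I n ∘ₗ symPowGen y n) =
      (⊥ : Ideal R).colon (Ideal.span {(y : R) ^ n}) := by
  ext r
  simp [symPowGen, alphaCan_symProd]

theorem torsionOf_le_ker_symPowGen (y : I) {n : ℕ} (hn : n ≠ 0) :
    Ideal.torsionOf R I y ≤ LinearMap.ker (symPowGen y n) := by
  intro r hr
  let i : Fin n := ⟨0, Nat.pos_of_ne_zero hn⟩
  calc r • symProd I n (fun _ => y)
      = symProd I n (Function.update (fun _ => y) i (r • y)) := by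
        rw [MultilinearMap.map_update_smul, Function.update_eq_self]
    _ = 0 := by rw [(Ideal.mem_torsionOf_iff y r).1 hr, MultilinearMap.map_update_zero]

theorem torsionOf_coe_eq_bot_colon (y : I) :
    Ideal.torsionOf R I y = (⊥ : Ideal R).colon (Ideal.span {(y : R)}) := by
  ext r
  simp [Subtype.ext_iff]

variable {y : I}

theorem symPowGen_surjective (hy : Submodule.span R {y} = ⊤) (n : ℕ) :
    Function.Surjective (symPowGen y n) := by
  rw [← LinearMap.range_eq_top, ← top_le_iff, ← span_range_symProd, Submodule.span_le]
  rintro _ ⟨v, rfl⟩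
  choose r hr using fun i => (Submodule.span_singleton_eq_top_iff R y).1 hy (v i)
  refine ⟨∏ i, r i, ?_⟩
  rw [symPowGen, LinearMap.toSpanSingleton_apply, ← MultilinearMap.map_smul_univ]
  exact congrArg _ (funext hr)

theorem exists_linearMap_quotient_torsionOf_eq_one (hy : Submodule.span R {y} = ⊤) :
    ∃ c : I →ₗ[R] R ⧸ Ideal.torsionOf R I y, c y = 1 := by
  let e := Ideal.quotTorsionOfEquivSpanSingleton R I y ≪≫ₗ LinearEquiv.ofTop _ hy
  have he : e 1 = y := one_smul R y
  exact ⟨e.symm, e.symm_apply_eq.2 he.symm⟩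

theorem ker_symPowGen_le_torsionOf (hy : Submodule.span R {y} = ⊤) (n : ℕ) :
    LinearMap.ker (symPowGen y n) ≤ Ideal.torsionOf R I y := by
  intro r hr
  obtain ⟨c, hc⟩ := exists_linearMap_quotient_torsionOf_eq_one hy
  obtain ⟨Φ, hΦ⟩ := exists_linearMap_symProd_eq_prod c n
  have hΦy : Φ (symProd I n fun _ => y) = 1 := by simp [hΦ, hc]
  rw [← Ideal.Quotient.eq_zero_iff_mem]
  calc Ideal.Quotient.mk _ r
      = r • Φ (symProd I n fun _ => y) := by
        rw [hΦy, Algebra.smul_def, mul_one, Ideal.Quotient.algebraMap_eq]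
    _ = Φ (symPowGen y n r) := (map_smul Φ r _).symm
    _ = 0 := by rw [LinearMap.mem_ker.1 hr, map_zero]

theorem ker_symPowGen (hy : Submodule.span R {y} = ⊤) {n : ℕ} (hn : n ≠ 0) :
    LinearMap.ker (symPowGen y n) = (⊥ : Ideal R).colon (Ideal.span {(y : R)}) :=
  (le_antisymm (ker_symPowGen_le_torsionOf hy n) (torsionOf_le_ker_symPowGen y hn)).trans
    (torsionOf_coe_eq_bot_colon y)

theorem nonempty_ker_alphaCan_equiv (hy : Submodule.span R {y} = ⊤) {n : ℕ} (hn : n ≠ 0) :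
    Nonempty (LinearMap.ker (alphaCan R I n) ≃ₗ[R]
      ((⊥ : Ideal R).colon (Ideal.span {(y : R) ^ n})) ⧸
        Submodule.comap ((⊥ : Ideal R).colon (Ideal.span {(y : R) ^ n})).subtype
          ((⊥ : Ideal R).colon (Ideal.span {(y : R)}))) := by
  rw [← ker_alphaCan_comp_symPowGen, ← ker_symPowGen hy hn]
  exact nonempty_ker_equiv_ker_comp_quotient (symPowGen_surjective hy n) _

theorem exists_injective_ker_alphaCan_of_le (hy : Submodule.span R {y} = ⊤) {m n : ℕ}
    (hm : m ≠ 0) (hmn : m ≤ n) :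
    ∃ f : LinearMap.ker (alphaCan R I m) →ₗ[R] LinearMap.ker (alphaCan R I n),
      Function.Injective f := by
  obtain ⟨eₘ⟩ := nonempty_ker_alphaCan_equiv hy hm
  obtain ⟨eₙ⟩ := nonempty_ker_alphaCan_equiv hy (by omega : n ≠ 0)
  obtain ⟨f, hf⟩ := exists_injective_quotient_comap_subtype
    (bot_colon_span_pow_mono (y : R) hmn) ((⊥ : Ideal R).colon (Ideal.span {(y : R)}))
  exact ⟨eₙ.symm.toLinearMap ∘ₗ f ∘ₗ eₘ.toLinearMap,
    eₙ.symm.injective.comp (hf.comp eₘ.injective)⟩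

theorem alphaCan_injective_iff (hy : Submodule.span R {y} = ⊤) {n : ℕ} (hn : n ≠ 0) :
    Function.Injective (alphaCan R I n) ↔
      (⊥ : Ideal R).colon (Ideal.span {(y : R) ^ n}) ≤
        (⊥ : Ideal R).colon (Ideal.span {(y : R)}) := by
  rw [injective_iff_ker_comp_le_ker (symPowGen_surjective hy n), ker_alphaCan_comp_symPowGen,
    ker_symPowGen hy hn]

theorem alphaCan_injective_of_two_le (hy : Submodule.span R {y} = ⊤) {p : ℕ}
    (hp : 2 ≤ p) (hinj : Function.Injective (alphaCan R I p)) (n : ℕ) :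
    Function.Injective (alphaCan R I n) := by
  rcases eq_or_ne n 0 with rfl | hn
  · exact alphaCan_zero_injective I
  · have hcolon := (alphaCan_injective_iff hy (by omega)).1 hinj
    exact (alphaCan_injective_iff hy hn).2 (bot_colon_span_pow_le_of_two_le hp hcolon hn)

end SymPow

/-- For a principal ideal `I = (x)`, `ker(α_{I,n}) ≅ (0 : xⁿ)/(0 : x)` for all `n ≥ 2`;
in particular there are injections `ker(α_{I,n}) ↪ ker(α_{I,n+1})`, and if `α_{I,p}` is
an isomorphism for some `p ≥ 2` then `α_I : Sym(I) → R(I)` is an isomorphism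
(i.e. every graded component is an isomorphism). -/
theorem statement12 {R : Type*} [CommRing R] (x : R) (I : Ideal R)
    (hI : I = Ideal.span {x}) :
    (∀ n, 2 ≤ n →
      Nonempty ((LinearMap.ker (alphaCan R I n)) ≃ₗ[R]
        (((⊥ : Ideal R).colon (Ideal.span {x ^ n})) ⧸
          Submodule.comap ((⊥ : Ideal R).colon (Ideal.span {x ^ n})).subtype
            ((⊥ : Ideal R).colon (Ideal.span {x}))))) ∧
    (∀ n, 2 ≤ n →
      ∃ f : (LinearMap.ker (alphaCan R I n)) →ₗ[R] (LinearMap.ker (alphaCan R I (n + 1))),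
        Function.Injective f) ∧
    (∀ p, 2 ≤ p → Function.Injective (alphaCan R I p) →
      ∀ n, Function.Injective (alphaCan R I n)) := by
  subst hI
  let y : Ideal.span {x} := ⟨x, Ideal.mem_span_singleton_self x⟩
  have hy : Submodule.span R {y} = ⊤ := by
    rw [Submodule.span_singleton_eq_top_iff]
    rintro ⟨z, hz⟩
    obtain ⟨r, hr⟩ := Ideal.mem_span_singleton'.1 hz
    exact ⟨r, Subtype.ext hr⟩
  exact ⟨fun n hn => nonempty_ker_alphaCan_equiv hy (by omega),
    fun n hn => exists_injective_ker_alphaCan_of_le hy (by omega) n.le_succ,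
    fun p hp hinj => alphaCan_injective_of_two_le hy hp hinj⟩
end

section
/- Let R be a commutative ring and let I = (x) be a principal ideal. Then for every n ≥ 2 there is an isomorphism of R-modules E(I)_n ≅ (0 : x^n)/(0 : x^{n-1}). -/
open scoped TensorProduct
open PiTensorProduct

section EDefs

variable (R : Type*) [CommRing R]

/-- "Multiplication by `x`" map on tensor powers: `w ↦ x ⊗ w`. -/
noncomputable def consMap (I : Ideal R) (n : ℕ) (x : ↥I) :
    TensPow R I n →ₗ[R] TensPow R I (n + 1) :=
  PiTensorProduct.lift
    ((PiTensorProduct.tprod R (s := fun _ : Fin (n + 1) => ↥I)).curryLeft x)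

/-- The submodule `Sym₁(I)·ker(α_{I,n}) ⊆ Sym_{n+1}(I)`. -/
noncomputable def symOneMulKer (I : Ideal R) (n : ℕ) : Submodule R (SymPow R I (n + 1)) :=
  Submodule.span R {z | ∃ (x : ↥I) (w : TensPow R I n),
    (Submodule.Quotient.mk w : SymPow R I n) ∈ LinearMap.ker (alphaCan R I n) ∧
    z = Submodule.Quotient.mk (consMap R I n x w)}

/-- The module of effective relations `E(I)_{n+1} = ker(α_{I,n+1})/Sym₁(I)·ker(α_{I,n})`. -/
abbrev EffRel (I : Ideal R) (n : ℕ) : Type _ :=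
  LinearMap.ker (alphaCan R I (n + 1)) ⧸
    Submodule.comap (LinearMap.ker (alphaCan R I (n + 1))).subtype (symOneMulKer R I n)

end EDefs

/-!
If `g` generates `I`, then its `n`-th power `gⁿ ∈ Symₙ(I)` generates `Symₙ(I)`, so `r ↦ r • gⁿ` is
a surjection `R → Symₙ(I)`; submodules of `Symₙ(I)` can therefore be compared through their
preimages in `R`. As `α_{I,n}` sends `gⁿ ∈ Symₙ(I)` to `gⁿ ∈ R`, the preimage of its kernel is
`(0 : gⁿ)`.

The submodule `Sym₁(I) · ker α_{I,n-1}` is the image of `(0 : gⁿ⁻¹)`. For its preimage to be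
`(0 : gⁿ⁻¹)` as well, the annihilator of `gⁿ ∈ Symₙ(I)` has to lie in `(0 : gⁿ⁻¹)`. It lies in
`(0 : g)`, because multiplying the images of the factors under `I ≅ R ⧸ (0 : g)` defines a linear
map `Symₙ(I) → R ⧸ (0 : g)` with `gⁿ ↦ 1`, and `(0 : g) ⊆ (0 : gⁿ⁻¹)` for `n ≥ 2`.
-/

/-- A surjective linear map `f` induces an isomorphism from the subquotient `f⁻¹(p) / f⁻¹(q)` of its
domain to the subquotient `p / q` of its codomain. As in `EffRel`, `p / q` is encoded as the
quotient of `p` by the preimage of `q` under the inclusion of `p`. -/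
noncomputable def subquotientComapEquiv {R M N : Type*} [Ring R] [AddCommGroup M] [AddCommGroup N]
    [Module R M] [Module R N] (f : M →ₗ[R] N) (hf : Function.Surjective f) (p q : Submodule R N) :
    (p.comap f ⧸ (q.comap f).comap (p.comap f).subtype) ≃ₗ[R] (p ⧸ q.comap p.subtype) :=
  let toQuotient := (q.comap p.subtype).mkQ ∘ₗ f.submoduleComap p
  have toQuotient_surjective : Function.Surjective toQuotient :=
    (Submodule.mkQ_surjective _).comp (f.submoduleComap_surjective_of_surjective p hf)
  have ker_toQuotient : (q.comap f).comap (p.comap f).subtype = LinearMap.ker toQuotient := by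
    rw [LinearMap.ker_comp, Submodule.ker_mkQ]
    rfl
  Submodule.quotEquivOfEq _ _ ker_toQuotient ≪≫ₗ
    toQuotient.quotKerEquivOfSurjective toQuotient_surjective

theorem span_tprod_const_eq_top {R ι M : Type*} [CommRing R] [Finite ι] [AddCommGroup M]
    [Module R M] {m : M} (hm : Submodule.span R {m} = ⊤) :
    Submodule.span R {tprod R fun _ : ι => m} = ⊤ := by
  simpa only [Set.range_const] using
    submodule_span_eq_top (R := R) (g := fun (_ : ι) (_ : Unit) => m) fun _ => by
      rwa [Set.range_const]

section

variable {R : Type*} [CommRing R] {I : Ideal R} {g : I}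

theorem alphaCan_mk_tprod {n : ℕ} (v : Fin n → I) :
    alphaCan R I n (Submodule.Quotient.mk (tprod R v)) = ∏ i, (v i : R) := by
  rw [alphaCan, Submodule.liftQ_apply, lift.tprod]
  rfl

theorem consMap_tprod {n : ℕ} (y : I) (v : Fin n → I) :
    consMap R I n y (tprod R v) = tprod R (Fin.cons y v : Fin (n + 1) → I) := by
  rw [consMap, lift.tprod, MultilinearMap.curryLeft_apply]

namespace SymPow

/-- The linear map out of `Symₙ(I)` induced by a symmetric multilinear map. -/
noncomputable def lift {N : Type*} [AddCommGroup N] [Module R N] {n : ℕ}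
    (f : MultilinearMap R (fun _ : Fin n => I) N)
    (hf : ∀ (v : Fin n → I) (σ : Equiv.Perm (Fin n)), f (v ∘ σ) = f v) :
    SymPow R I n →ₗ[R] N :=
  (symRel R I n).liftQ (PiTensorProduct.lift f) <| by
    rw [symRel, Submodule.span_le]
    rintro _ ⟨v, σ, rfl⟩
    rw [SetLike.mem_coe, LinearMap.mem_ker, map_sub, lift.tprod, lift.tprod, hf, sub_self]

theorem lift_mk_tprod {N : Type*} [AddCommGroup N] [Module R N] {n : ℕ}
    (f : MultilinearMap R (fun _ : Fin n => I) N)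
    (hf : ∀ (v : Fin n → I) (σ : Equiv.Perm (Fin n)), f (v ∘ σ) = f v) (v : Fin n → I) :
    lift f hf (Submodule.Quotient.mk (tprod R v)) = f v := by
  rw [lift, Submodule.liftQ_apply, lift.tprod]

/-- The `n`-th power `gⁿ` of `g ∈ I = Sym₁(I)` in the symmetric algebra, an element of `Symₙ(I)`. -/
noncomputable def pow (g : I) (n : ℕ) : SymPow R I n :=
  Submodule.Quotient.mk (tprod R fun _ => g)

theorem alphaCan_pow (g : I) (n : ℕ) : alphaCan R I n (pow g n) = (g : R) ^ n := by
  rw [pow, alphaCan_mk_tprod, Fin.prod_const]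

theorem mk_consMap_smul_smul_tprod_const (g : I) (n : ℕ) (a b : R) :
    (Submodule.Quotient.mk (consMap R I n (a • g) (b • tprod R fun _ => g)) :
      SymPow R I (n + 1)) = (b * a) • pow g (n + 1) := by
  have cons_const : (Fin.cons g fun _ => g : Fin (n + 1) → I) = fun _ => g :=
    Fin.cons_self_tail fun _ => g
  rw [map_smul, consMap_tprod, MultilinearMap.cons_smul, cons_const, smul_smul,
    Submodule.Quotient.mk_smul, pow]

theorem toSpanSingleton_pow_surjective (hg : Submodule.span R {g} = ⊤) (n : ℕ) :
    Function.Surjective (LinearMap.toSpanSingleton R (SymPow R I n) (pow g n)) := by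
  intro z
  obtain ⟨w, rfl⟩ := Submodule.Quotient.mk_surjective _ z
  obtain ⟨r, rfl⟩ := (Submodule.span_singleton_eq_top_iff ..).1 (span_tprod_const_eq_top hg) w
  exact ⟨r, rfl⟩

theorem torsionOf_pow_le (hg : Submodule.span R {g} = ⊤) (n : ℕ) :
    Ideal.torsionOf R (SymPow R I n) (pow g n) ≤ Ideal.torsionOf R I g := by
  let coord : I ≃ₗ[R] R ⧸ Ideal.torsionOf R I g :=
    ((LinearMap.toSpanSingleton R I g).quotKerEquivOfSurjective
      ((Submodule.span_singleton_eq_top_iff ..).1 hg)).symm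
  have coord_gen : coord g = 1 := (LinearEquiv.symm_apply_eq _).2 (one_smul R g).symm
  let coordProd : SymPow R I n →ₗ[R] R ⧸ Ideal.torsionOf R I g :=
    lift ((MultilinearMap.mkPiAlgebra R (Fin n) _).compLinearMap fun _ => coord.toLinearMap)
      fun v σ => Equiv.prod_comp σ fun i => coord (v i)
  have coordProd_pow : coordProd (pow g n) = 1 :=
    (lift_mk_tprod _ _ _).trans (by simp [coord_gen])
  intro r hr
  rw [Ideal.mem_torsionOf_iff] at hr
  rw [← Ideal.Quotient.eq_zero_iff_mem]
  calc Ideal.Quotient.mk _ r = r • coordProd (pow g n) := by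
        rw [coordProd_pow, Algebra.smul_def, mul_one]
        rfl
    _ = 0 := by rw [← map_smul, hr, map_zero]

theorem comap_ker_alphaCan (g : I) (n : ℕ) :
    (LinearMap.ker (alphaCan R I n)).comap (LinearMap.toSpanSingleton R _ (pow g n)) =
      (⊥ : Ideal R).colon (Ideal.span {(g : R) ^ n}) := by
  ext r
  rw [Submodule.mem_comap, LinearMap.mem_ker, LinearMap.toSpanSingleton_apply, map_smul,
    alphaCan_pow, Ideal.mem_colon_span_singleton, Ideal.mem_bot, smul_eq_mul]

theorem symOneMulKer_eq_map (hg : Submodule.span R {g} = ⊤) (n : ℕ) :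
    symOneMulKer R I n = Submodule.map (LinearMap.toSpanSingleton R _ (pow g (n + 1)))
      ((⊥ : Ideal R).colon (Ideal.span {(g : R) ^ n})) := by
  have mk_mem_ker_iff (b : R) : (Submodule.Quotient.mk (b • tprod R fun _ => g) : SymPow R I n) ∈
      LinearMap.ker (alphaCan R I n) ↔ b ∈ (⊥ : Ideal R).colon (Ideal.span {(g : R) ^ n}) := by
    rw [← comap_ker_alphaCan]
    rfl
  apply le_antisymm
  · rw [symOneMulKer, Submodule.span_le]
    rintro _ ⟨y, w, hw, rfl⟩
    obtain ⟨a, rfl⟩ := (Submodule.span_singleton_eq_top_iff ..).1 hg y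
    obtain ⟨b, rfl⟩ := (Submodule.span_singleton_eq_top_iff ..).1 (span_tprod_const_eq_top hg) w
    rw [mk_mem_ker_iff] at hw
    exact ⟨b * a, Ideal.mul_mem_right a _ hw,
      (mk_consMap_smul_smul_tprod_const g n a b).symm⟩
  · rintro _ ⟨b, hb, rfl⟩
    refine Submodule.subset_span ⟨g, b • tprod R fun _ => g, (mk_mem_ker_iff b).2 hb, ?_⟩
    simpa only [LinearMap.toSpanSingleton_apply, one_smul, mul_one] using
      (mk_consMap_smul_smul_tprod_const g n 1 b).symm

theorem comap_symOneMulKer (hg : Submodule.span R {g} = ⊤) {n : ℕ} (hn : n ≠ 0) :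
    (symOneMulKer R I n).comap (LinearMap.toSpanSingleton R _ (pow g (n + 1))) =
      (⊥ : Ideal R).colon (Ideal.span {(g : R) ^ n}) := by
  rw [symOneMulKer_eq_map hg]
  refine Submodule.comap_map_eq_self ((torsionOf_pow_le hg (n + 1)).trans fun r hr => ?_)
  have mul_gen : r * (g : R) = 0 := congrArg Subtype.val ((Ideal.mem_torsionOf_iff g r).1 hr)
  rw [Ideal.mem_colon_span_singleton, Ideal.mem_bot, ← mul_pow_sub_one hn, ← mul_assoc, mul_gen,
    zero_mul]

end SymPow

end

/-- For a principal ideal `I = (x)` and every `n ≥ 2` there is an isomorphism of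
`R`-modules `E(I)ₙ ≅ (0 : xⁿ)/(0 : xⁿ⁻¹)`   (here `EffRel R I (n-1) = E(I)ₙ`,
since `EffRel R I m = ker(α_{I,m+1})/Sym₁(I)·ker(α_{I,m})`). -/
theorem statement13 {R : Type*} [CommRing R] (x : R) (I : Ideal R)
    (hI : I = Ideal.span {x}) :
    ∀ n, 2 ≤ n →
      Nonempty ((EffRel R I (n - 1)) ≃ₗ[R]
        (((⊥ : Ideal R).colon (Ideal.span {x ^ n})) ⧸
          Submodule.comap ((⊥ : Ideal R).colon (Ideal.span {x ^ n})).subtype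
            ((⊥ : Ideal R).colon (Ideal.span {x ^ (n - 1)})))) := by
  intro n hn
  subst hI
  let g : Ideal.span {x} := ⟨x, Ideal.mem_span_singleton_self x⟩
  have hg : Submodule.span R {g} = ⊤ := by
    rw [← LinearMap.submoduleOf_span_singleton_of_mem]
    exact Submodule.submoduleOf_self _
  obtain ⟨m, rfl⟩ : ∃ m, n = m + 1 := Nat.exists_eq_add_of_le' (by omega)
  rw [Nat.add_sub_cancel, ← SymPow.comap_ker_alphaCan g, ← SymPow.comap_symOneMulKer hg (by omega)]
  exact ⟨(subquotientComapEquiv _ (SymPow.toSpanSingleton_pow_surjective hg _) _ _).symm⟩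
end
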